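/- arXiv:1506.05719 — 3 statements merged into one kernel-verified Lean document; each statement's English description precedes it below -/
import Mathlib

section
/- For every i, there is no edge between X_i and Y_{i+1} ∪ Y_{i+2} ∪ Y_{i+4}: every vertex of X_i is non-adjacent to every vertex of Y_{i+1}, of Y_{i+2}, and of Y_{i+4}. -/
open SimpleGraph

/-- The claw `K_{1,3}`: vertex 0 adjacent to 1, 2, 3. -/
def claw : SimpleGraph (Fin 4) := SimpleGraph.fromRel (fun a _ => a = 0)

/-- `4K_1`: the edgeless graph on four vertices. -/
def fourK1 : SimpleGraph (Fin 4) := ⊥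

/-- `K_5 - e`: the complete graph on five vertices minus the edge {0,1}. -/
def K5e : SimpleGraph (Fin 5) :=
  SimpleGraph.fromRel (fun a b => ¬(a = 0 ∧ b = 1) ∧ ¬(a = 1 ∧ b = 0))

/-- The 5-wheel: the cycle 0-1-2-3-4-0 together with hub 5 adjacent to all. -/
def wheel5 : SimpleGraph (Fin 6) :=
  SimpleGraph.fromRel (fun a b =>
    (a ≠ 5 ∧ b ≠ 5 ∧ b.val = (a.val + 1) % 5) ∨ a = 5 ∨ b = 5)

/-- The `C_5`-twin: the cycle 0-1-2-3-4-0 together with vertex 5, a true twin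
of vertex 0 (adjacent to 0, 1 and 4). -/
def C5twin : SimpleGraph (Fin 6) :=
  SimpleGraph.fromRel (fun a b =>
    (a ≠ 5 ∧ b ≠ 5 ∧ b.val = (a.val + 1) % 5) ∨ (a = 5 ∧ (b = 0 ∨ b = 1 ∨ b = 4)))

/-- The `P_5`-twin: the path 0-1-2-3-4 together with vertex 5, a true twin of
the middle vertex 2 (adjacent to 1, 2 and 3). -/
def P5twin : SimpleGraph (Fin 6) :=
  SimpleGraph.fromRel (fun a b =>
    (a ≠ 5 ∧ b ≠ 5 ∧ b.val = a.val + 1) ∨ (a = 5 ∧ (b = 1 ∨ b = 2 ∨ b = 3)))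

/-- The chordless cycle on seven vertices. -/
def C7 : SimpleGraph (Fin 7) :=
  SimpleGraph.fromRel (fun a b => b.val = (a.val + 1) % 7)

/-- `G` is `H`-free: `G` contains no induced subgraph isomorphic to `H`,
i.e. there is no graph embedding of `H` into `G`. -/
def Free {V W : Type*} (G : SimpleGraph V) (H : SimpleGraph W) : Prop :=
  IsEmpty (H ↪g G)

/-- `X_i`: vertices outside the five-cycle `v 0, …, v 4` whose neighbours on the
cycle are exactly `v i` and `v (i+1)`. -/
def cycX {V : Type*} (G : SimpleGraph V) (v : ZMod 5 → V) (i : ZMod 5) : Set V :=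
  {w | w ∉ Set.range v ∧ ∀ j : ZMod 5, G.Adj w (v j) ↔ (j = i ∨ j = i + 1)}

/-- `Y_i`: vertices outside the five-cycle whose neighbours on the cycle are
exactly `v i, v (i+1), v (i+2), v (i+3)`. -/
def cycY {V : Type*} (G : SimpleGraph V) (v : ZMod 5 → V) (i : ZMod 5) : Set V :=
  {w | w ∉ Set.range v ∧
    ∀ j : ZMod 5, G.Adj w (v j) ↔ (j = i ∨ j = i + 1 ∨ j = i + 2 ∨ j = i + 3)}

/-- `R`: vertices outside the five-cycle with no neighbour on the cycle. -/
def cycR {V : Type*} (G : SimpleGraph V) (v : ZMod 5 → V) : Set V :=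
  {w | w ∉ Set.range v ∧ ∀ j : ZMod 5, ¬ G.Adj w (v j)}

/-!
A vertex `x` of `X_i` misses the nonadjacent cycle vertices `v_{i+2}` and `v_{i+4}`. A vertex of
`Y_j` misses only `v_{j+4}`, which for `j = i + 1, i + 2, i + 4` is `v_i`, `v_{i+1}`, `v_{i+3}`,
so it sees both. If it also saw `x`, it would be the centre of a claw with leaves `x`, `v_{i+2}`,
`v_{i+4}`.
-/

section ClawFree

variable {V : Type*} {G : SimpleGraph V}

theorem claw_adj {a b : Fin 4} : claw.Adj a b ↔ a ≠ b ∧ (a = 0 ∨ b = 0) :=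
  fromRel_adj _ _ _

/-- The induced claw with centre `c` whose leaves are three distinct, pairwise nonadjacent
neighbours of `c`. The centre is the image of `0`, and `leaf k` is the image of `k.succ`. -/
def clawEmbedding (c : V) (leaf : Fin 3 ↪ V) (center_adj : ∀ k, G.Adj c (leaf k))
    (leaf_not_adj : ∀ j k, ¬ G.Adj (leaf j) (leaf k)) : claw ↪g G where
  toFun := Fin.cons c leaf
  inj' := Fin.cons_injective_iff.2 ⟨fun ⟨k, hk⟩ ↦ (center_adj k).ne hk.symm, leaf.injective⟩
  map_rel_iff' {a b} := by
    cases a using Fin.cases <;> cases b using Fin.cases <;>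
      simp [claw_adj, center_adj, leaf_not_adj, G.adj_comm _ c, (Fin.succ_ne_zero _).symm]

theorem adj_or_adj_or_adj_of_free_claw (hclaw : _root_.Free G claw) {c p q r : V}
    (hp : G.Adj c p) (hq : G.Adj c q) (hr : G.Adj c r) (hpq : p ≠ q) (hpr : p ≠ r) (hqr : q ≠ r) :
    G.Adj p q ∨ G.Adj p r ∨ G.Adj q r := by
  by_contra! ⟨npq, npr, nqr⟩
  have leaf_injective : Function.Injective ![p, q, r] := by
    simp [Function.Injective, Fin.forall_fin_succ, hpq, hpr, hqr, hpq.symm, hpr.symm, hqr.symm]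
  refine hclaw.false (clawEmbedding c ⟨![p, q, r], leaf_injective⟩ ?_ ?_)
  · simp [Fin.forall_fin_succ, hp, hq, hr]
  · simp [Fin.forall_fin_succ, npq, npr, nqr, G.adj_comm q p, G.adj_comm r p, G.adj_comm r q]

end ClawFree

section FiveCycle

variable {V : Type*} {G : SimpleGraph V} {v : ZMod 5 → V} {i j k : ZMod 5} {x y : V}

theorem ne_of_mem_cycX (hx : x ∈ cycX G v i) (k : ZMod 5) : x ≠ v k :=
  fun h ↦ hx.1 ⟨k, h.symm⟩

theorem adj_iff_ne_of_mem_cycY (hy : y ∈ cycY G v j) : G.Adj y (v k) ↔ k ≠ j + 4 := by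
  have residues : ∀ j k : ZMod 5,
      (k = j ∨ k = j + 1 ∨ k = j + 2 ∨ k = j + 3) ↔ k ≠ j + 4 := by decide
  rw [hy.2, residues]

theorem adj_add_two_and_adj_add_four_of_mem_cycY
    (hy : y ∈ cycY G v (i + 1) ∪ cycY G v (i + 2) ∪ cycY G v (i + 4)) :
    G.Adj y (v (i + 2)) ∧ G.Adj y (v (i + 4)) := by
  rcases hy with (hy | hy) | hy <;>
    simp only [adj_iff_ne_of_mem_cycY hy, add_assoc, ne_eq, add_right_inj] <;> decide

theorem not_adj_of_mem_cycX_of_adj (hclaw : _root_.Free G claw) (hv : Function.Injective v)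
    (hC : ∀ i j : ZMod 5, G.Adj (v i) (v j) ↔ (j = i + 1 ∨ i = j + 1))
    (hx : x ∈ cycX G v i) (hy₂ : G.Adj y (v (i + 2))) (hy₄ : G.Adj y (v (i + 4))) :
    ¬ G.Adj x y := by
  intro hxy
  have hx₂ : ¬ G.Adj x (v (i + 2)) := by
    simp only [hx.2, add_eq_left, add_right_inj]
    decide
  have hx₄ : ¬ G.Adj x (v (i + 4)) := by
    simp only [hx.2, add_eq_left, add_right_inj]
    decide
  have h₂₄ : ¬ G.Adj (v (i + 2)) (v (i + 4)) := by
    simp only [hC, add_assoc, add_right_inj]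
    decide
  have hne : v (i + 2) ≠ v (i + 4) := by
    simp only [ne_eq, hv.eq_iff, add_right_inj]
    decide
  rcases adj_or_adj_or_adj_of_free_claw hclaw hxy.symm hy₂ hy₄ (ne_of_mem_cycX hx _)
    (ne_of_mem_cycX hx _) hne with h | h | h
  exacts [hx₂ h, hx₄ h, h₂₄ h]

end FiveCycle

theorem stmt_6_general {V : Type*} (G : SimpleGraph V) (hclaw : _root_.Free G claw)
    (v : ZMod 5 → V) (hv : Function.Injective v)
    (hC : ∀ i j : ZMod 5, G.Adj (v i) (v j) ↔ (j = i + 1 ∨ i = j + 1)) :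
    ∀ i : ZMod 5, ∀ x ∈ cycX G v i,
      ∀ y ∈ cycY G v (i + 1) ∪ cycY G v (i + 2) ∪ cycY G v (i + 4), ¬ G.Adj x y := by
  intro i x hx y hy
  obtain ⟨hy₂, hy₄⟩ := adj_add_two_and_adj_add_four_of_mem_cycY hy
  exact not_adj_of_mem_cycX_of_adj hclaw hv hC hx hy₂ hy₄

theorem stmt_6     {V : Type*} [Fintype V] (G : SimpleGraph V)
    (hconn : G.Connected)
    (hclaw : _root_.Free G claw) (h4K1 : _root_.Free G fourK1) (hK5e : _root_.Free G K5e)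
    (hW5 : _root_.Free G wheel5) (hC5t : _root_.Free G C5twin) (hP5t : _root_.Free G P5twin)
    (v : ZMod 5 → V) (hv : Function.Injective v)
    (hC : ∀ i j : ZMod 5, G.Adj (v i) (v j) ↔ (j = i + 1 ∨ i = j + 1)) :
    ∀ i : ZMod 5, ∀ x ∈ cycX G v i,
      ∀ y ∈ cycY G v (i + 1) ∪ cycY G v (i + 2) ∪ cycY G v (i + 4), ¬ G.Adj x y :=
  stmt_6_general G hclaw v hv hC
end

section
/- If R is non-empty, then |X_i| ≤ 2 for every i. -/
open SimpleGraph

/-!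
Let `r ∈ R`. The vertices `r`, `v (i + 2)`, `v (i - 1)` are independent, and a vertex of `X_i` is
adjacent to neither of the last two, so `4K_1`-freeness makes it adjacent to `r`. Any two vertices
of `X_i` are neighbours of `v i` not adjacent to `v (i - 1)`, so claw-freeness makes `X_i` a clique.
Three vertices of `X_i`, together with the nonadjacent vertices `r` and `v i`, would then induce
`K_5 - e`.
-/

section FreeGraphs

variable {V : Type*} {G : SimpleGraph V} {a b : V}

theorem nonempty_embedding_of_forall_lt {W : Type*} [LinearOrder W] {H : SimpleGraph W} (f : W → V)
    (hne : ∀ i j, i < j → f i ≠ f j)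
    (hadj : ∀ i j, i < j → (G.Adj (f i) (f j) ↔ H.Adj i j)) : Nonempty (H ↪g G) := by
  refine ⟨⟨⟨f, Function.Injective.of_lt_imp_ne hne⟩, fun {i j} => ?_⟩⟩
  change G.Adj (f i) (f j) ↔ H.Adj i j
  rcases lt_trichotomy i j with hij | rfl | hji
  · exact hadj i j hij
  · exact iff_of_false G.irrefl H.irrefl
  · rw [G.adj_comm, H.adj_comm, hadj j i hji]

theorem isClique_neighborSet_diff_of_free_claw (hG : _root_.Free G claw) (hab : G.Adj a b) :
    G.IsClique (G.neighborSet a \ insert b (G.neighborSet b)) := by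
  rintro x ⟨hax, hx⟩ y ⟨hay, hy⟩ hxy
  simp only [Set.mem_insert_iff, mem_neighborSet, not_or] at hax hay hx hy
  by_contra hnxy
  refine not_nonempty_iff.2 hG (nonempty_embedding_of_forall_lt ![a, b, x, y] ?_ ?_)
  · simp [Fin.forall_fin_succ, hab.ne, hax.ne, hay.ne, Ne.symm hx.1, Ne.symm hy.1, hxy]
  · simp [Fin.forall_fin_succ, claw, hab, hax, hay, hx.2, hy.2, hnxy]

theorem indepSetFree_four_of_free_fourK1 (hG : _root_.Free G fourK1) : G.IndepSetFree 4 := by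
  rw [← cliqueFree_compl]
  by_contra hclique
  have e : (⊤ : SimpleGraph (Fin 4)) ↪g Gᶜ := topEmbeddingOfNotCliqueFree hclique
  exact hG.false (Embedding.complEquiv.symm (by simpa [fourK1] using e))

theorem cliqueFreeOn_commonNeighbors_of_free_K5e (hG : _root_.Free G K5e) (hne : a ≠ b)
    (hab : ¬ G.Adj a b) : G.CliqueFreeOn (G.commonNeighbors a b) 3 := by
  classical
  intro t ht htri
  obtain ⟨x, y, z, hxy, hxz, hyz, rfl⟩ := is3Clique_iff.1 htri
  obtain ⟨hax, hbx⟩ : G.Adj a x ∧ G.Adj b x := ht (by simp)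
  obtain ⟨hay, hby⟩ : G.Adj a y ∧ G.Adj b y := ht (by simp)
  obtain ⟨haz, hbz⟩ : G.Adj a z ∧ G.Adj b z := ht (by simp)
  refine not_nonempty_iff.2 hG (nonempty_embedding_of_forall_lt ![a, b, x, y, z] ?_ ?_)
  · simp [Fin.forall_fin_succ, hne, hax.ne, hay.ne, haz.ne, hbx.ne, hby.ne, hbz.ne, hxy.ne, hxz.ne,
      hyz.ne]
  · simp [Fin.forall_fin_succ, K5e, hab, hax, hay, haz, hbx, hby, hbz, hxy, hxz, hyz]

end FreeGraphs

section CliquesAndIndepSets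

variable {V : Type*} {G : SimpleGraph V} {n : ℕ}

theorem exists_adj_of_indepSetFree_succ {s : Finset V} {x : V} (hG : G.IndepSetFree (n + 1))
    (hs : G.IsNIndepSet n s) (hx : x ∉ s) : ∃ y ∈ s, G.Adj x y := by
  obtain ⟨y, hy, hxy⟩ :=
    ((isNClique_compl G).2 hs).exists_not_adj_of_cliqueFree_succ ((cliqueFree_compl G).2 hG) x
  have hne : x ≠ y := fun h => hx (h ▸ hy)
  exact ⟨y, hy, by simpa [compl_adj, hne] using hxy⟩

theorem encard_lt_of_isClique_of_cliqueFreeOn {s : Set V} (hs : G.IsClique s)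
    (hfree : G.CliqueFreeOn s n) : s.encard < n := by
  by_contra! hcard
  obtain ⟨t, hts, htn⟩ := Set.exists_subset_encard_eq hcard
  lift t to Finset V using Set.finite_of_encard_eq_coe htn
  exact hfree hts ⟨hs.subset hts, by simpa using htn⟩

end CliquesAndIndepSets

section FiveCycle

variable {V : Type*} {G : SimpleGraph V} {v : ZMod 5 → V} {i : ZMod 5} {r : V}

theorem isNIndepSet_three_of_mem_cycR [DecidableEq V] (hv : Function.Injective v)
    (hC : ∀ i j : ZMod 5, G.Adj (v i) (v j) ↔ (j = i + 1 ∨ i = j + 1)) (hr : r ∈ cycR G v)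
    (j : ZMod 5) : G.IsNIndepSet 3 {r, v j, v (j + 2)} := by
  have hrv (k : ZMod 5) : r ≠ v k := fun h => hr.1 ⟨k, h.symm⟩
  have hindex : ∀ j : ZMod 5, j ≠ j + 2 ∧ ¬ (j + 2 = j + 1 ∨ j = j + 2 + 1) := by decide
  rw [← isNClique_compl, is3Clique_triple_iff]
  simp only [compl_adj]
  exact ⟨⟨hrv _, hr.2 _⟩, ⟨hrv _, hr.2 _⟩, hv.ne (hindex j).1, fun h => (hindex j).2 ((hC _ _).1 h)⟩

theorem adj_of_mem_cycR_of_mem_cycX (hG : G.IndepSetFree 4) (hv : Function.Injective v)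
    (hC : ∀ i j : ZMod 5, G.Adj (v i) (v j) ↔ (j = i + 1 ∨ i = j + 1)) (hr : r ∈ cycR G v)
    {x : V} (hx : x ∈ cycX G v i) : G.Adj r x := by
  classical
  have hxr : x ≠ r := by
    rintro rfl
    exact hr.2 i ((hx.2 i).2 (.inl rfl))
  have hxv (k : ZMod 5) : x ≠ v k := fun h => hx.1 ⟨k, h.symm⟩
  obtain ⟨y, hy, hxy⟩ := exists_adj_of_indepSetFree_succ hG
    (isNIndepSet_three_of_mem_cycR hv hC hr (i + 2)) (x := x) (by simp [hxr, hxv])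
  have hindex : ∀ i : ZMod 5,
      ¬ (i + 2 = i ∨ i + 2 = i + 1) ∧ ¬ (i + 2 + 2 = i ∨ i + 2 + 2 = i + 1) := by decide
  simp only [Finset.mem_insert, Finset.mem_singleton] at hy
  rcases hy with rfl | rfl | rfl
  · exact hxy.symm
  · exact absurd ((hx.2 _).1 hxy) (hindex i).1
  · exact absurd ((hx.2 _).1 hxy) (hindex i).2

theorem isClique_cycX (hG : _root_.Free G claw)
    (hC : ∀ i j : ZMod 5, G.Adj (v i) (v j) ↔ (j = i + 1 ∨ i = j + 1)) (i : ZMod 5) :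
    G.IsClique (cycX G v i) := by
  have hadj : G.Adj (v i) (v (i - 1)) := (hC _ _).2 (.inr (by ring))
  have hindex : ∀ i : ZMod 5, ¬ (i - 1 = i ∨ i - 1 = i + 1) := by decide
  refine IsClique.subset ?_ (isClique_neighborSet_diff_of_free_claw hG hadj)
  refine fun x hx => ⟨((hx.2 i).2 (.inl rfl)).symm, ?_⟩
  rintro (rfl | hadj')
  · exact hx.1 ⟨_, rfl⟩
  · exact hindex i ((hx.2 _).1 hadj'.symm)

theorem cycX_subset_commonNeighbors (hG : G.IndepSetFree 4) (hv : Function.Injective v)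
    (hC : ∀ i j : ZMod 5, G.Adj (v i) (v j) ↔ (j = i + 1 ∨ i = j + 1)) (hr : r ∈ cycR G v)
    (i : ZMod 5) : cycX G v i ⊆ G.commonNeighbors r (v i) :=
  fun _ hx => ⟨adj_of_mem_cycR_of_mem_cycX hG hv hC hr hx, ((hx.2 i).2 (.inl rfl)).symm⟩

end FiveCycle

theorem stmt_11_general {V : Type*} (G : SimpleGraph V) (hclaw : _root_.Free G claw)
    (h4K1 : _root_.Free G fourK1) (hK5e : _root_.Free G K5e)
    (v : ZMod 5 → V) (hv : Function.Injective v)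
    (hC : ∀ i j : ZMod 5, G.Adj (v i) (v j) ↔ (j = i + 1 ∨ i = j + 1))
    (hR : (cycR G v).Nonempty) (i : ZMod 5) : (cycX G v i).encard ≤ 2 := by
  obtain ⟨r, hr⟩ := hR
  have hne : r ≠ v i := fun h => hr.1 ⟨i, h.symm⟩
  have hsub : cycX G v i ⊆ G.commonNeighbors r (v i) :=
    cycX_subset_commonNeighbors (indepSetFree_four_of_free_fourK1 h4K1) hv hC hr i
  have hfree : G.CliqueFreeOn (cycX G v i) 3 :=
    CliqueFreeOn.subset _ hsub (cliqueFreeOn_commonNeighbors_of_free_K5e hK5e hne (hr.2 i))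
  have hlt : (cycX G v i).encard < 3 :=
    encard_lt_of_isClique_of_cliqueFreeOn (isClique_cycX hclaw hC i) hfree
  exact Order.le_of_lt_add_one hlt

theorem stmt_11     {V : Type*} [Fintype V] (G : SimpleGraph V)
    (hconn : G.Connected)
    (hclaw : _root_.Free G claw) (h4K1 : _root_.Free G fourK1) (hK5e : _root_.Free G K5e)
    (hW5 : _root_.Free G wheel5) (hC5t : _root_.Free G C5twin) (hP5t : _root_.Free G P5twin)
    (v : ZMod 5 → V) (hv : Function.Injective v)
    (hC : ∀ i j : ZMod 5, G.Adj (v i) (v j) ↔ (j = i + 1 ∨ i = j + 1))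
    (hR : (cycR G v).Nonempty) :
    ∀ i : ZMod 5, (cycX G v i).ncard ≤ 2 :=
  fun i => (Set.encard_le_coe_iff_finite_ncard_le.1
    (stmt_11_general G hclaw h4K1 hK5e v hv hC hR i)).2
end

section
/- If X is non-empty, then |R| ≤ 2 or X is a clique cutset of G. -/
open SimpleGraph

/-!
If `u` and `w` are non-adjacent in a `4K₁`-free graph, the vertices adjacent to neither of them form
a clique. The vertices `v (i + 2)` and `v (i + 4)` of the five-cycle have no neighbour in `X_i ∪ R`,
so `R` is a clique complete to `X`. Once `|R| ≥ 3`, two non-adjacent vertices of `X` and three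
vertices of `R` would induce a `K_5 - e`, so `X` is a clique. Claw-freeness shows that a vertex with
neighbours both in `R` and on the cycle lies in `X`, so `X` separates `R` from the cycle.
-/

section FreeGraphs

variable {V W : Type*} {G : SimpleGraph V} {H : SimpleGraph W}

theorem not_free_of_forall_lt [LinearOrder W] (f : W → V)
    (hf : ∀ ⦃x y⦄, x < y → f x ≠ f y ∧ (G.Adj (f x) (f y) ↔ H.Adj x y)) : ¬ _root_.Free G H := by
  have ne_and_adj_iff : ∀ ⦃x y⦄, x ≠ y → f x ≠ f y ∧ (G.Adj (f x) (f y) ↔ H.Adj x y) := by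
    intro x y hxy
    rcases hxy.lt_or_gt with h | h
    · exact hf h
    · rw [ne_comm, G.adj_comm, H.adj_comm]
      exact hf h
  refine fun hfree => hfree.false ⟨⟨f, fun x y hxy => ?_⟩, fun {x y} => ?_⟩
  · by_contra hne
    exact (ne_and_adj_iff hne).1 hxy
  · rcases eq_or_ne x y with rfl | hne
    · simp
    · exact (ne_and_adj_iff hne).2

theorem isClique_neighborSet_inter_compl_neighborSet_of_free_claw (hclaw : _root_.Free G claw)
    {a b : V} (hab : G.Adj a b) : G.IsClique (G.neighborSet a ∩ Gᶜ.neighborSet b) := by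
  rintro c ⟨hac, hbc⟩ d ⟨had, hbd⟩ hcd
  by_contra hadj
  refine not_free_of_forall_lt ![a, b, c, d] (fun x y hxy => ?_) hclaw
  simp only [mem_neighborSet, compl_adj] at hac hbc had hbd
  fin_cases x <;> fin_cases y <;> simp_all [claw, hab.ne, hac.ne, had.ne]

theorem isClique_compl_commonNeighbors_of_free_fourK1 (h4K1 : _root_.Free G fourK1)
    {a b : V} (hab : Gᶜ.Adj a b) : G.IsClique (Gᶜ.commonNeighbors a b) := by
  rintro c ⟨hac, hbc⟩ d ⟨had, hbd⟩ hcd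
  by_contra hadj
  refine not_free_of_forall_lt ![a, b, c, d] (fun x y hxy => ?_) h4K1
  simp only [mem_neighborSet, compl_adj] at hab hac hbc had hbd
  fin_cases x <;> fin_cases y <;> simp_all [fourK1]

theorem adj_of_free_K5e_of_isClique_of_subset_commonNeighbors (hK5e : _root_.Free G K5e)
    {a b : V} (hab : a ≠ b) {s : Set V} (hs : G.IsClique s) (hsub : s ⊆ G.commonNeighbors a b)
    (hcard : 2 < s.encard) : G.Adj a b := by
  obtain ⟨t, hts, ht⟩ := Set.exists_subset_encard_eq (Order.add_one_le_of_lt hcard)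
  obtain ⟨c, d, e, hcd, hce, hde, rfl⟩ := Set.encard_eq_three.1 (ht.trans two_add_one_eq_three)
  obtain ⟨hac, hbc⟩ : G.Adj a c ∧ G.Adj b c := hsub (hts (by simp))
  obtain ⟨had, hbd⟩ : G.Adj a d ∧ G.Adj b d := hsub (hts (by simp))
  obtain ⟨hae, hbe⟩ : G.Adj a e ∧ G.Adj b e := hsub (hts (by simp))
  have hcd' : G.Adj c d := hs (hts (by simp)) (hts (by simp)) hcd
  have hce' : G.Adj c e := hs (hts (by simp)) (hts (by simp)) hce
  have hde' : G.Adj d e := hs (hts (by simp)) (hts (by simp)) hde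
  by_contra hadj
  refine not_free_of_forall_lt ![a, b, c, d, e] (fun x y hxy => ?_) hK5e
  fin_cases x <;> fin_cases y <;>
    simp_all [K5e, hac.ne, had.ne, hae.ne, hbc.ne, hbd.ne, hbe.ne]

end FreeGraphs

theorem not_connected_induce_compl_of_separates {V : Type*} {G : SimpleGraph V} {A S : Set V}
    (hA : ∀ a ∈ A, ∀ b, G.Adj a b → b ∈ A ∪ S) {a b : V} (ha : a ∈ A \ S) (hb : b ∉ A ∪ S) :
    ¬ (G.induce Sᶜ).Connected := by
  intro hconn
  obtain ⟨p⟩ := hconn.preconnected ⟨a, ha.2⟩ ⟨b, fun h => hb (.inr h)⟩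
  obtain ⟨d, -, hfst, hsnd⟩ :=
    p.exists_boundary_dart (Subtype.val ⁻¹' A) ha.1 fun h => hb (.inl h)
  exact (hA _ hfst _ d.adj).elim hsnd d.snd.2

/-- `v 0, …, v 4`, in this cyclic order, induce a five-cycle in `G`. Injectivity of `v` is not part
of the definition, see `IsInducedFiveCycle.injective`. -/
def IsInducedFiveCycle {V : Type*} (G : SimpleGraph V) (v : ZMod 5 → V) : Prop :=
  ∀ i j : ZMod 5, G.Adj (v i) (v j) ↔ (j = i + 1 ∨ i = j + 1)

section FiveCycle

variable {V : Type*} {G : SimpleGraph V} {v : ZMod 5 → V} {i j : ZMod 5} {w x r : V}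

theorem IsInducedFiveCycle.injective (hC : IsInducedFiveCycle G v) : Function.Injective v := by
  intro i j hij
  have same_neighbors : ∀ k, (k = i + 1 ∨ i = k + 1) ↔ (k = j + 1 ∨ j = k + 1) := fun k => by
    rw [← hC i k, ← hC j k, hij]
  clear hij
  revert i j
  decide

theorem IsInducedFiveCycle.compl_adj_iff (hC : IsInducedFiveCycle G v) :
    Gᶜ.Adj (v i) (v j) ↔ (j = i + 2 ∨ i = j + 2) := by
  rw [compl_adj, hC.injective.ne_iff, hC i j]
  revert i j
  decide

theorem compl_adj_of_mem_cycX (hx : x ∈ cycX G v i) (hi : j ≠ i) (hi' : j ≠ i + 1) :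
    Gᶜ.Adj (v j) x :=
  (compl_adj ..).2 ⟨fun h => hx.1 ⟨j, h⟩, fun h => ((hx.2 j).1 h.symm).elim hi hi'⟩

theorem compl_adj_of_mem_cycR (hr : r ∈ cycR G v) (j : ZMod 5) : Gᶜ.Adj (v j) r :=
  (compl_adj ..).2 ⟨fun h => hr.1 ⟨j, h⟩, fun h => hr.2 j h.symm⟩

theorem disjoint_cycX_cycR (i : ZMod 5) : Disjoint (cycX G v i) (cycR G v) :=
  Set.disjoint_left.2 fun _ hx hr => hr.2 i ((hx.2 i).2 (.inl rfl))

theorem isClique_cycX_union_cycR (h4K1 : _root_.Free G fourK1) (hC : IsInducedFiveCycle G v)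
    (i : ZMod 5) : G.IsClique (cycX G v i ∪ cycR G v) := by
  have compl_adj_pair : Gᶜ.Adj (v (i + 2)) (v (i + 4)) :=
    hC.compl_adj_iff.2 (.inl (by ring))
  refine (isClique_compl_commonNeighbors_of_free_fourK1 h4K1 compl_adj_pair).subset ?_
  rintro x (hx | hr)
  · constructor <;> apply compl_adj_of_mem_cycX hx <;> clear * - <;> revert i <;> decide
  · exact ⟨compl_adj_of_mem_cycR hr _, compl_adj_of_mem_cycR hr _⟩

theorem adj_of_mem_cycX_of_mem_cycR (h4K1 : _root_.Free G fourK1) (hC : IsInducedFiveCycle G v)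
    (hx : x ∈ cycX G v i) (hr : r ∈ cycR G v) : G.Adj x r :=
  isClique_cycX_union_cycR h4K1 hC i (.inl hx) (.inr hr) ((disjoint_cycX_cycR i).ne_of_mem hx hr)

theorem isClique_iUnion_cycX (h4K1 : _root_.Free G fourK1) (hK5e : _root_.Free G K5e)
    (hC : IsInducedFiveCycle G v) (hR : 2 < (cycR G v).encard) :
    G.IsClique (⋃ i, cycX G v i) := by
  intro x hx y hy hxy
  obtain ⟨i, hxi⟩ := Set.mem_iUnion.1 hx
  obtain ⟨j, hyj⟩ := Set.mem_iUnion.1 hy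
  exact adj_of_free_K5e_of_isClique_of_subset_commonNeighbors hK5e hxy
    ((isClique_cycX_union_cycR h4K1 hC 0).subset Set.subset_union_right)
    (fun r hr => ⟨adj_of_mem_cycX_of_mem_cycR h4K1 hC hxi hr,
      adj_of_mem_cycX_of_mem_cycR h4K1 hC hyj hr⟩) hR

theorem exists_adj_adj_succ_of_free_claw (hclaw : _root_.Free G claw)
    (hC : IsInducedFiveCycle G v) (hw : w ∉ Set.range v) (hwi : G.Adj w (v i)) :
    ∃ k, G.Adj w (v k) ∧ G.Adj w (v (k + 1)) := by
  by_contra! h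
  have compl_adj_succ : Gᶜ.Adj w (v (i + 1)) :=
    (compl_adj ..).2 ⟨fun e => hw ⟨_, e.symm⟩, h i hwi⟩
  have compl_adj_pred : Gᶜ.Adj w (v (i - 1)) :=
    (compl_adj ..).2 ⟨fun e => hw ⟨_, e.symm⟩, fun h' => h _ h' (by rwa [sub_add_cancel])⟩
  have compl_adj_pair : Gᶜ.Adj (v (i + 1)) (v (i - 1)) := hC.compl_adj_iff.2 (.inr (by ring))
  exact ((compl_adj ..).1 compl_adj_pair).2 <|
    isClique_neighborSet_inter_compl_neighborSet_of_free_claw hclaw hwi.symm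
      ⟨(hC _ _).2 (.inl rfl), compl_adj_succ⟩
      ⟨(hC _ _).2 (.inr (sub_add_cancel i 1).symm), compl_adj_pred⟩ compl_adj_pair.ne

theorem mem_iUnion_cycX_of_adj_of_adj (hclaw : _root_.Free G claw) (hC : IsInducedFiveCycle G v)
    (hr : r ∈ cycR G v) (hrw : G.Adj r w) (hwi : G.Adj w (v i)) : w ∈ ⋃ i, cycX G v i := by
  have hw : w ∉ Set.range v := by
    rintro ⟨j, rfl⟩
    exact hr.2 j hrw
  have cycle_neighbors_clique : ∀ j k, G.Adj w (v j) → G.Adj w (v k) → j ≠ k →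
      (k = j + 1 ∨ j = k + 1) := fun j k hj hk hjk =>
    (hC j k).1 <| isClique_neighborSet_inter_compl_neighborSet_of_free_claw hclaw hrw.symm
      ⟨hj, (compl_adj_of_mem_cycR hr j).symm⟩ ⟨hk, (compl_adj_of_mem_cycR hr k).symm⟩
      (hC.injective.ne hjk)
  obtain ⟨k, hk, hk'⟩ := exists_adj_adj_succ_of_free_claw hclaw hC hw hwi
  refine Set.mem_iUnion.2 ⟨k, hw, fun j => ⟨fun hj => ?_, ?_⟩⟩
  · have adj_k := cycle_neighbors_clique k j hk hj
    have adj_succ := cycle_neighbors_clique (k + 1) j hk' hj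
    clear * - adj_k adj_succ
    revert k j
    decide
  · rintro (rfl | rfl) <;> assumption

theorem not_connected_induce_compl_iUnion_cycX (hclaw : _root_.Free G claw)
    (hC : IsInducedFiveCycle G v) (hR : (cycR G v).Nonempty) :
    ¬ (G.induce (⋃ i, cycX G v i)ᶜ).Connected := by
  obtain ⟨r, hr⟩ := hR
  have hrX : r ∉ ⋃ i, cycX G v i := fun hx =>
    let ⟨i, hxi⟩ := Set.mem_iUnion.1 hx
    (disjoint_cycX_cycR i).notMem_of_mem_left hxi hr
  have hvX : v 0 ∉ ⋃ i, cycX G v i := fun hx =>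
    let ⟨_, hxi⟩ := Set.mem_iUnion.1 hx
    hxi.1 ⟨0, rfl⟩
  refine not_connected_induce_compl_of_separates (A := cycR G v) (fun s hs w hsw => ?_)
    ⟨hr, hrX⟩ (b := v 0) fun h => h.elim (fun h' => h'.1 ⟨0, rfl⟩) hvX
  by_cases hw : ∃ i, G.Adj w (v i)
  · obtain ⟨i, hwi⟩ := hw
    exact .inr (mem_iUnion_cycX_of_adj_of_adj hclaw hC hs hsw hwi)
  · refine .inl ⟨?_, not_exists.1 hw⟩
    rintro ⟨j, rfl⟩
    exact hs.2 j hsw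

end FiveCycle

/-- The bound is on `encard`, since `ncard` takes the junk value `0` on infinite sets. -/
theorem stmt_13_general {V : Type*} (G : SimpleGraph V)
    (hclaw : _root_.Free G claw) (h4K1 : _root_.Free G fourK1) (hK5e : _root_.Free G K5e)
    (v : ZMod 5 → V) (hC : IsInducedFiveCycle G v) :
    (cycR G v).encard ≤ 2 ∨
      (G.IsClique (⋃ i : ZMod 5, cycX G v i) ∧
        ¬ (G.induce ((⋃ i : ZMod 5, cycX G v i)ᶜ : Set V)).Connected) := by
  refine or_iff_not_imp_left.2 fun hR => ?_
  have two_lt_encard : 2 < (cycR G v).encard := not_le.1 hR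
  have hne : (cycR G v).Nonempty := Set.encard_pos.1 (two_lt_encard.trans' two_pos)
  exact ⟨isClique_iUnion_cycX h4K1 hK5e hC two_lt_encard,
    not_connected_induce_compl_iUnion_cycX hclaw hC hne⟩

theorem stmt_13     {V : Type*} [Fintype V] (G : SimpleGraph V)
    (hconn : G.Connected)
    (hclaw : _root_.Free G claw) (h4K1 : _root_.Free G fourK1) (hK5e : _root_.Free G K5e)
    (hW5 : _root_.Free G wheel5) (hC5t : _root_.Free G C5twin) (hP5t : _root_.Free G P5twin)
    (v : ZMod 5 → V) (hv : Function.Injective v)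
    (hC : ∀ i j : ZMod 5, G.Adj (v i) (v j) ↔ (j = i + 1 ∨ i = j + 1))
    (hX : (⋃ i : ZMod 5, cycX G v i).Nonempty) :
    (cycR G v).ncard ≤ 2 ∨
      (G.IsClique (⋃ i : ZMod 5, cycX G v i) ∧
        ¬ (G.induce ((⋃ i : ZMod 5, cycX G v i)ᶜ : Set V)).Connected) :=
  (stmt_13_general G hclaw h4K1 hK5e v hC).imp_left fun h =>
    (Set.encard_le_coe_iff_finite_ncard_le.1 h).2
end
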